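/- Let (W,S) be a finite Coxeter system, J, K ⊆ S, and w ∈ W. Let w_min and w_max be the unique Bruhat-minimal and Bruhat-maximal elements of (W_J·w·W_K) ∩ W^K. Then (W_J·w·W_K) ∩ W^K is the full Bruhat interval in W^K, i.e. (W_J·w·W_K) ∩ W^K = { u ∈ W^K : w_min ≤ u ≤ w_max }. -/

import Mathlib

/-- The Bruhat order on a Coxeter group: `u ≤ v` iff some reduced word for `v`
contains a subword that is a reduced word for `u`. -/
def CoxeterSystem.bruhatLE {B W : Type*} [Group W] {M : CoxeterMatrix B}
    (cs : CoxeterSystem M W) (u v : W) : Prop :=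
  ∃ l : List B, cs.IsReduced l ∧ cs.wordProd l = v ∧
    ∃ l' : List B, l'.Sublist l ∧ cs.IsReduced l' ∧ cs.wordProd l' = u

/-- The standard parabolic subgroup `W_J` generated by the simple reflections
indexed by `J`. -/
def CoxeterSystem.parabolic {B W : Type*} [Group W] {M : CoxeterMatrix B}
    (cs : CoxeterSystem M W) (J : Set B) : Subgroup W :=
  Subgroup.closure (cs.simple '' J)

/-- `W^K` : the set of elements of minimal length in their coset `w · W_K`. -/
def CoxeterSystem.minLengthReps {B W : Type*} [Group W] {M : CoxeterMatrix B}
    (cs : CoxeterSystem M W) (K : Set B) : Set W :=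
  {w | ∀ u ∈ cs.parabolic K, cs.length w ≤ cs.length (w * u)}

/-- The double coset `W_J · w · W_K`. -/
def CoxeterSystem.doubleCoset {B W : Type*} [Group W] {M : CoxeterMatrix B}
    (cs : CoxeterSystem M W) (J K : Set B) (w : W) : Set W :=
  {x | ∃ p ∈ cs.parabolic J, ∃ q ∈ cs.parabolic K, x = p * w * q}

namespace BruhatAux

open CoxeterSystem List

variable {B W : Type*} [Group W] {M : CoxeterMatrix B} (cs : CoxeterSystem M W)

open scoped Classical in
/-- The action of a simple reflection on `W × ZMod 2`. -/
noncomputable def actFun (i : B) (x : W × ZMod 2) : W × ZMod 2 :=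
  (cs.simple i * x.1 * cs.simple i, x.2 + if x.1 = cs.simple i then 1 else 0)

theorem actFun_invol (i : B) : Function.Involutive (actFun cs i) := by
  rintro ⟨t, e⟩
  have h : cs.simple i * t * cs.simple i = cs.simple i ↔ t = cs.simple i := by
    constructor
    · intro h
      have h2 := congrArg (fun x => cs.simple i * x * cs.simple i) h
      simpa [mul_assoc] using h2
    · rintro rfl
      simp
  unfold actFun
  apply Prod.ext
  · simp [mul_assoc]
  · by_cases h' : t = cs.simple i
    · have h1 := h.mpr h'
      dsimp only
      rw [if_pos h', if_pos h1, add_assoc, show (1 + 1 : ZMod 2) = 0 by decide, add_zero]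
    · have h1 := fun h2 => h' (h.mp h2)
      dsimp only
      rw [if_neg h', if_neg h1, add_zero, add_zero]

/-- The action as a permutation. -/
noncomputable def actPerm (i : B) : Equiv.Perm (W × ZMod 2) :=
  (actFun_invol cs i).toPerm

open scoped Classical in
theorem prod_actPerm (ω : List B) (t : W) (e : ZMod 2) :
    (ω.map (actPerm cs)).prod (t, e) =
      (cs.wordProd ω * t * (cs.wordProd ω)⁻¹, e + ((cs.rightInvSeq ω).count t : ℕ)) := by
  induction ω with
  | nil => simp
  | cons i ω ih =>
    rw [List.map_cons, List.prod_cons, Equiv.Perm.mul_apply, ih]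
    change actFun cs i _ = _
    simp only [actFun, rightInvSeq, Prod.mk.injEq, wordProd_cons, mul_inv_rev, inv_simple]
    constructor
    · simp only [mul_assoc]
    · rw [List.count_cons, Nat.cast_add, add_assoc]
      congr 2
      have : (cs.wordProd ω * t * (cs.wordProd ω)⁻¹ = cs.simple i) ↔
          (cs.wordProd ω)⁻¹ * cs.simple i * cs.wordProd ω = t := by
        constructor
        · intro h
          rw [← h]; group
        · rintro rfl
          group
      simp only [this, beq_iff_eq]
      split_ifs <;> simp

theorem leftInvSeq_alt (i j : B) :
    ∃ L : List W, cs.leftInvSeq (alternatingWord i j (2 * M i j)) = L ++ L := by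
  refine ⟨(cs.leftInvSeq (alternatingWord i j (2 * M i j))).take (M i j), ?_⟩
  apply List.ext_getElem
  · simp; omega
  · intro k h1 h2
    have hk : k < 2 * M i j := by simpa using h1
    rw [List.getElem_append]
    split_ifs with h
    · simp
    · have hk' : M i j ≤ k := by
        simp at h; omega
      have hlen : ((cs.leftInvSeq (alternatingWord i j (2 * M i j))).take (M i j)).length
          = M i j := by simp; omega
      simp only [List.getElem_take, hlen]
      rw [getElem_leftInvSeq_alternatingWord cs i j _ k hk,
        getElem_leftInvSeq_alternatingWord cs i j _ (k - M i j) (by omega)]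
      rw [prod_alternatingWord_eq_mul_pow, prod_alternatingWord_eq_mul_pow]
      have e1 : ¬ Even (2 * k + 1) := by simp
      have e2 : ¬ Even (2 * (k - M i j) + 1) := by simp
      simp only [e1, e2, if_false]
      congr 1
      have : (2 * k + 1) / 2 = (2 * (k - M i j) + 1) / 2 + M i j := by omega
      rw [this, pow_add]
      have := cs.simple_mul_simple_pow' i j
      have := cs.simple_mul_simple_pow i j
      simp [*]

theorem alternatingWord_map_prod {G : Type*} [Group G] (f : B → G) (i j : B) (m : ℕ) :
    ((alternatingWord i j (2 * m)).map f).prod = (f i * f j) ^ m := by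
  induction m with
  | zero => simp [alternatingWord]
  | succ m ih =>
    have : 2 * (m + 1) = (2 * m + 1) + 1 := by ring
    rw [this, alternatingWord, alternatingWord]
    simp only [List.concat_eq_append, List.map_append, List.prod_append, ih, pow_succ]
    simp [mul_assoc]

theorem actPerm_liftable : M.IsLiftable (actPerm cs) := by
  classical
  intro i j
  rw [← alternatingWord_map_prod]
  ext1 ⟨t, e⟩
  rw [prod_actPerm]
  have h1 : cs.wordProd (alternatingWord i j (2 * M i j)) = 1 := by
    rw [wordProd, alternatingWord_map_prod]; simp
  have h2 : ((cs.rightInvSeq (alternatingWord i j (2 * M i j))).count t : ZMod 2) = 0 := by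
    obtain ⟨L, hL⟩ := leftInvSeq_alt cs j i
    have hr : (alternatingWord i j (2 * M i j)).reverse = alternatingWord j i (2 * M j i) := by
      rw [M.symmetric j i]
      generalize M i j = m
      induction m with
      | zero => simp [alternatingWord]
      | succ m ih =>
        have : 2 * (m + 1) = (2 * m + 1) + 1 := by ring
        rw [this]
        conv_lhs => rw [alternatingWord, alternatingWord]
        rw [alternatingWord_succ', alternatingWord_succ']
        simp [ih]
    rw [← hr, leftInvSeq_reverse] at hL
    rw [← List.count_reverse, hL, List.count_append, Nat.cast_add, CharTwo.add_self_eq_zero]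
  rw [h1, h2]
  simp

/-- The permutation representation. -/
noncomputable def rep : W →* Equiv.Perm (W × ZMod 2) :=
  cs.lift ⟨actPerm cs, actPerm_liftable cs⟩

open scoped Classical in
theorem rep_wordProd (ω : List B) (t : W) (e : ZMod 2) :
    rep cs (cs.wordProd ω) (t, e) =
      (cs.wordProd ω * t * (cs.wordProd ω)⁻¹, e + ((cs.rightInvSeq ω).count t : ℕ)) := by
  rw [← prod_actPerm, wordProd, map_list_prod, List.map_map]
  congr 3
  funext i
  simp [rep, cs.lift_apply_simple (actPerm_liftable cs)]

theorem rep_apply (w t : W) : ∃ n : ZMod 2, ∀ e, rep cs w (t, e) = (w * t * w⁻¹, e + n) := by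
  classical
  obtain ⟨ω, rfl⟩ := cs.wordProd_surjective w
  exact ⟨_, fun e => rep_wordProd cs ω t e⟩

theorem rep_refl {t : W} (ht : cs.IsReflection t) (e : ZMod 2) :
    rep cs t (t, e) = (t, e + 1) := by
  obtain ⟨u, i, rfl⟩ := ht
  obtain ⟨n, hn⟩ := rep_apply cs u (cs.simple i)
  have h1 : rep cs u⁻¹ (u * cs.simple i * u⁻¹, e) = (cs.simple i, e - n) := by
    rw [map_inv, Equiv.Perm.inv_eq_iff_eq, hn]
    simp
  have h2 : rep cs (cs.simple i) (cs.simple i, e - n) = (cs.simple i, e - n + 1) := by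
    simp [rep, cs.lift_apply_simple (actPerm_liftable cs), actPerm, actFun]
  rw [map_mul, map_mul, Equiv.Perm.mul_apply, Equiv.Perm.mul_apply, h1, h2, hn]
  congr 1
  ring

/-- Strong exchange. -/
theorem mem_rightInvSeq {ω : List B} {t : W} (h : cs.IsRightInversion (cs.wordProd ω) t) :
    t ∈ cs.rightInvSeq ω := by
  classical
  by_contra hn
  obtain ⟨ht, hl⟩ := h
  obtain ⟨ω', hr, hω'⟩ := cs.exists_isReduced (cs.wordProd ω * t)
  have h1 := rep_wordProd cs ω' t 0
  rw [← hω', map_mul, Equiv.Perm.mul_apply, rep_refl cs ht, rep_wordProd,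
    List.count_eq_zero_of_not_mem hn] at h1
  have h2 := congrArg Prod.snd h1
  have h3 : t ∈ cs.rightInvSeq ω' := by
    by_contra h3
    rw [List.count_eq_zero_of_not_mem h3] at h2
    simp at h2
  have h4 := (cs.isRightInversion_of_mem_rightInvSeq hr h3).2
  rw [← hω', mul_assoc, ht.mul_self, mul_one] at h4
  omega

theorem exchange {ω : List B} {t : W} (h : cs.IsRightInversion (cs.wordProd ω) t) :
    ∃ j < ω.length, cs.wordProd ω * t = cs.wordProd (ω.eraseIdx j) := by
  obtain ⟨j, hj, rfl⟩ := List.mem_iff_getElem.mp (mem_rightInvSeq cs h)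
  refine ⟨j, by simpa using hj, ?_⟩
  rw [← wordProd_mul_getD_rightInvSeq, List.getD_eq_getElem _ _ hj]

/-- One step of the Bruhat graph. -/
def Step (u v : W) : Prop := ∃ t, cs.IsReflection t ∧ u = v * t ∧ cs.length u < cs.length v

/-- Chains in the Bruhat graph. -/
def Chain (u v : W) : Prop := Relation.ReflTransGen (Step cs) u v

theorem chain_sublist {u v : W} (h : Chain cs u v) :
    ∀ l : List B, cs.wordProd l = v → ∃ l', l'.Sublist l ∧ cs.wordProd l' = u := by
  induction h with
  | refl => intro l hl; exact ⟨l, Sublist.refl l, hl⟩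
  | tail _ hs ih =>
    rintro l rfl
    obtain ⟨t, ht, rfl, hlt⟩ := hs
    obtain ⟨j, -, hj⟩ := exchange cs ⟨ht, hlt⟩
    obtain ⟨l', h1, h2⟩ := ih _ hj.symm
    exact ⟨l', h1.trans (List.eraseIdx_sublist ..), h2⟩

theorem step_simple {u v : W} (h : Step cs u v) (i : B) :
    cs.simple i * u = v ∨ Step cs (cs.simple i * u) (cs.simple i * v) := by
  obtain ⟨t, ht, hu, hlt⟩ := h
  have hv : v = u * t := by rw [hu, mul_assoc, ht.mul_self, mul_one]
  by_cases hc : cs.length (cs.simple i * u) < cs.length (cs.simple i * v)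
  · right
    exact ⟨t, ht, by rw [hu, mul_assoc], hc⟩
  · left
    have hne : cs.length (cs.simple i * v) ≠ cs.length (cs.simple i * u) := by
      rw [hv, ← mul_assoc]
      exact ht.length_mul_left_ne _
    obtain ⟨ω, hr, rfl⟩ := cs.exists_isReduced u
    have hinv : cs.IsRightInversion (cs.wordProd (i :: ω)) t := by
      refine ⟨ht, ?_⟩
      rw [wordProd_cons, mul_assoc, ← hv]
      omega
    obtain ⟨j, hj, he⟩ := exchange cs hinv
    rw [wordProd_cons, mul_assoc, ← hv] at he
    cases j with
    | zero =>
      simp only [List.eraseIdx_cons_zero] at he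
      rw [← he]; simp
    | succ j =>
      exfalso
      rw [List.eraseIdx_cons_succ, wordProd_cons, mul_right_inj] at he
      have h1 := cs.length_wordProd_le (ω.eraseIdx j)
      rw [← he] at h1
      have h2 := hr.eq
      have h3 := List.length_eraseIdx_le ω j
      omega

theorem chain_simple {u v : W} (h : Chain cs u v) (i : B) :
    Chain cs (cs.simple i * u) v ∨ Chain cs (cs.simple i * u) (cs.simple i * v) := by
  induction h using Relation.ReflTransGen.head_induction_on with
  | refl => exact Or.inr Relation.ReflTransGen.refl
  | head hs hc ih =>
    rcases step_simple cs hs i with h | h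
    · left; rw [h]; exact hc
    · exact ih.imp (Relation.ReflTransGen.head h) (Relation.ReflTransGen.head h)

theorem chain_of_sublist {l l' : List B} (h : l'.Sublist l) (hr : cs.IsReduced l) :
    Chain cs (cs.wordProd l') (cs.wordProd l) := by
  induction h with
  | slnil => exact Relation.ReflTransGen.refl
  | @cons l₁ l₂ i h ih =>
    have hr2 : cs.IsReduced l₂ := by simpa using hr.drop 1
    refine (ih hr2).tail ?_
    refine ⟨(cs.wordProd l₂)⁻¹ * cs.simple i * ((cs.wordProd l₂)⁻¹)⁻¹,
      (cs.isReflection_simple i).conj _, ?_, ?_⟩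
    · simp [wordProd_cons, mul_assoc]
    · rw [hr.eq, hr2.eq]; simp
  | @cons_cons l₁ l₂ i h ih =>
    have hr2 : cs.IsReduced l₂ := by simpa using hr.drop 1
    rw [wordProd_cons, wordProd_cons]
    rcases chain_simple cs (ih hr2) i with h | h
    · refine h.tail ⟨(cs.wordProd l₂)⁻¹ * cs.simple i * ((cs.wordProd l₂)⁻¹)⁻¹,
        (cs.isReflection_simple i).conj _, ?_, ?_⟩
      · simp [mul_assoc]
      · rw [← wordProd_cons, hr.eq, hr2.eq]; simp
    · exact h

theorem bruhat_sublist {u v : W} (h : cs.bruhatLE u v) (l : List B) (hl : cs.wordProd l = v) :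
    ∃ l', l'.Sublist l ∧ cs.wordProd l' = u := by
  obtain ⟨m, hm, rfl, m', hs, -, rfl⟩ := h
  exact chain_sublist cs (chain_of_sublist cs hs hm) l hl

theorem bruhat_length {u v : W} (h : cs.bruhatLE u v) : cs.length u ≤ cs.length v := by
  obtain ⟨m, hm, rfl, m', hs, hm', rfl⟩ := h
  rw [hm.eq, hm'.eq]
  exact hs.length_le

theorem deletion (l : List B) :
    ∃ l', l'.Sublist l ∧ cs.IsReduced l' ∧ cs.wordProd l' = cs.wordProd l := by
  induction l with
  | nil => exact ⟨[], Sublist.refl _, by simp [CoxeterSystem.IsReduced], rfl⟩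
  | cons i l ih =>
    obtain ⟨m, hs, hr, hm⟩ := ih
    rcases cs.length_simple_mul (cs.wordProd m) i with h | h
    · refine ⟨i :: m, hs.cons_cons i, ?_, ?_⟩
      · simp only [CoxeterSystem.IsReduced, wordProd_cons, h, hr.eq, List.length_cons]
      · simp [wordProd_cons, hm]
    · have hinv : cs.IsRightInversion (cs.wordProd m)
          ((cs.wordProd m)⁻¹ * cs.simple i * ((cs.wordProd m)⁻¹)⁻¹) := by
        refine ⟨(cs.isReflection_simple i).conj _, ?_⟩
        simp [← mul_assoc]
        omega
      obtain ⟨j, hj, he⟩ := exchange cs hinv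
      have he' : cs.simple i * cs.wordProd m = cs.wordProd (m.eraseIdx j) := by
        rw [← he]; simp [← mul_assoc]
      refine ⟨m.eraseIdx j, ((List.eraseIdx_sublist ..).trans hs).cons i, ?_, ?_⟩
      · have := List.length_eraseIdx_of_lt hj
        have := hr.eq
        rw [CoxeterSystem.IsReduced, ← he']
        omega
      · rw [← he', wordProd_cons, hm]

theorem wordProd_mem (J : Set B) (l : List B) (h : ∀ i ∈ l, i ∈ J) :
    cs.wordProd l ∈ cs.parabolic J := by
  apply Subgroup.list_prod_mem
  intro x hx
  obtain ⟨i, hi, rfl⟩ := List.mem_map.mp hx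
  exact Subgroup.subset_closure ⟨i, h i hi, rfl⟩

theorem exists_word (J : Set B) {p : W} (hp : p ∈ cs.parabolic J) :
    ∃ l : List B, (∀ i ∈ l, i ∈ J) ∧ cs.wordProd l = p := by
  induction hp using Subgroup.closure_induction with
  | mem x hx =>
    obtain ⟨i, hi, rfl⟩ := hx
    exact ⟨[i], by simpa using hi, by simp⟩
  | one => exact ⟨[], by simp, by simp⟩
  | mul x y _ _ hx hy =>
    obtain ⟨l, hl, rfl⟩ := hx
    obtain ⟨m, hm, rfl⟩ := hy
    refine ⟨l ++ m, ?_, by simp [wordProd_append]⟩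
    intro i hi
    rcases List.mem_append.mp hi with h | h
    · exact hl i h
    · exact hm i h
  | inv x _ hx =>
    obtain ⟨l, hl, rfl⟩ := hx
    exact ⟨l.reverse, by simpa using hl, by simp [wordProd_reverse]⟩

theorem dc_mul {J K : Set B} {w x p q : W} (hx : x ∈ cs.doubleCoset J K w)
    (hp : p ∈ cs.parabolic J) (hq : q ∈ cs.parabolic K) :
    p * x * q ∈ cs.doubleCoset J K w := by
  obtain ⟨a, ha, b, hb, rfl⟩ := hx
  exact ⟨p * a, mul_mem hp ha, b * q, mul_mem hb hq, by simp only [mul_assoc]⟩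

theorem exists_minRep (K : Set B) (y : W) :
    ∃ q ∈ cs.parabolic K, y * q ∈ cs.minLengthReps K ∧ cs.length (y * q) ≤ cs.length y := by
  classical
  have hex : ∃ n, ∃ q ∈ cs.parabolic K, cs.length (y * q) = n := ⟨_, 1, one_mem _, rfl⟩
  obtain ⟨q, hq, hn⟩ := Nat.find_spec hex
  have hle : ∀ q' ∈ cs.parabolic K, cs.length (y * q) ≤ cs.length (y * q') := by
    intro q' hq'
    rw [hn]
    exact Nat.find_min' hex ⟨q', hq', rfl⟩
  refine ⟨q, hq, ?_, by simpa using hle 1 (one_mem _)⟩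
  intro r hr
  rw [mul_assoc]
  exact hle _ (mul_mem hq hr)

end BruhatAux

open BruhatAux CoxeterSystem


/-- In a finite Coxeter system, if `wmin` and `wmax` are the unique Bruhat-minimal and
Bruhat-maximal elements of `(W_J · w · W_K) ∩ W^K`, then this set is the full Bruhat
interval `[wmin, wmax]` in `W^K`. -/
theorem stmt_1 {B W : Type*} [Group W] [Finite W] {M : CoxeterMatrix B}
    (cs : CoxeterSystem M W) (J K : Set B) (w : W) (wmin wmax : W)
    (hmin : wmin ∈ cs.doubleCoset J K w ∩ cs.minLengthReps K ∧
      ∀ u ∈ cs.doubleCoset J K w ∩ cs.minLengthReps K, cs.bruhatLE wmin u)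
    (hmax : wmax ∈ cs.doubleCoset J K w ∩ cs.minLengthReps K ∧
      ∀ u ∈ cs.doubleCoset J K w ∩ cs.minLengthReps K, cs.bruhatLE u wmax) :
    cs.doubleCoset J K w ∩ cs.minLengthReps K
      = {u | u ∈ cs.minLengthReps K ∧ cs.bruhatLE wmin u ∧ cs.bruhatLE u wmax} := by

  obtain ⟨⟨hmin1, hmin2⟩, hmin3⟩ := hmin
  obtain ⟨⟨hmax1, hmax2⟩, hmax3⟩ := hmax
  ext u
  constructor
  · intro hu
    exact ⟨hu.2, hmin3 u hu, hmax3 u hu⟩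
  rintro ⟨huK, hu1, hu2⟩
  refine ⟨?_, huK⟩
  -- `wmin` has minimal length in the whole double coset
  have hlen : ∀ y ∈ cs.doubleCoset J K w, cs.length wmin ≤ cs.length y := by
    intro y hy
    obtain ⟨q, hq, h1, h2⟩ := exists_minRep cs K y
    have h3 := dc_mul cs hy (one_mem (cs.parabolic J)) hq
    rw [one_mul] at h3
    exact (bruhat_length cs (hmin3 _ ⟨h3, h1⟩)).trans h2
  obtain ⟨lx, hlx, hx⟩ := cs.exists_isReduced wmin
  have hxlen : cs.length wmin = lx.length := by rw [hx]; exact hlx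
  -- a sublist of `lx` whose product is in the double coset is `lx`
  have hrig : ∀ m : List B, m.Sublist lx → cs.wordProd m ∈ cs.doubleCoset J K w → m = lx := by
    intro m hm hd
    apply hm.eq_of_length_le
    rw [← hxlen]
    exact (hlen _ hd).trans (cs.length_wordProd_le m)
  -- `wmax = p * wmin`
  obtain ⟨lp, hlp, hwmax⟩ : ∃ lp : List B, (∀ i ∈ lp, i ∈ J) ∧
      cs.wordProd (lp ++ lx) = wmax := by
    have hpq : ∃ p ∈ cs.parabolic J, ∃ q ∈ cs.parabolic K, wmax = p * wmin * q := by
      obtain ⟨a, ha, b, hb, h1⟩ := hmin1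
      obtain ⟨c, hc, d, hd, h2⟩ := hmax1
      refine ⟨c * a⁻¹, mul_mem hc (inv_mem ha), b⁻¹ * d, mul_mem (inv_mem hb) hd, ?_⟩
      rw [h1, h2]; group
    obtain ⟨p, hp, q, hq, he⟩ := hpq
    obtain ⟨mp, hmp, rfl⟩ := exists_word cs J hp
    obtain ⟨mq, hmq, rfl⟩ := exists_word cs K hq
    obtain ⟨m, hm, hmr, hme⟩ := deletion cs (mp ++ lx ++ mq)
    obtain ⟨m12, m3, rfl, hm12, hm3⟩ := List.sublist_append_iff.mp hm
    obtain ⟨m1, m2, rfl, hm1, hm2⟩ := List.sublist_append_iff.mp hm12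
    have h1J : ∀ i ∈ m1, i ∈ J := fun i hi => hmp i (hm1.subset hi)
    have h3K : ∀ i ∈ m3, i ∈ K := fun i hi => hmq i (hm3.subset hi)
    have hp1 := wordProd_mem cs J m1 h1J
    have hp3 := wordProd_mem cs K m3 h3K
    have hw : wmax = cs.wordProd (m1 ++ m2 ++ m3) := by
      rw [hme, he, hx]; simp [wordProd_append, mul_assoc]
    have h2 : m2 = lx := by
      apply hrig m2 hm2
      have := dc_mul cs hmax1 (inv_mem hp1) (inv_mem hp3)
      rw [hw] at this
      simpa [wordProd_append, mul_assoc] using this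
    subst h2
    have h4 := hmax2 _ (inv_mem hp3)
    rw [hw, hmr.eq] at h4
    have h5 : cs.wordProd (m1 ++ m2 ++ m3) * (cs.wordProd m3)⁻¹ = cs.wordProd (m1 ++ m2) := by
      simp [wordProd_append, mul_assoc]
    rw [h5] at h4
    have h6 := h4.trans (cs.length_wordProd_le _)
    have h7 : m3 = [] := by
      apply List.eq_nil_of_length_eq_zero
      simp only [List.length_append] at h6
      omega
    subst h7
    exact ⟨m1, h1J, by rw [hw]; simp⟩
  obtain ⟨m, hm, hmu⟩ := bruhat_sublist cs hu2 _ hwmax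
  obtain ⟨m1, m2, rfl, hm1, hm2⟩ := List.sublist_append_iff.mp hm
  obtain ⟨n, hn, hnx⟩ := bruhat_sublist cs hu1 _ hmu
  obtain ⟨n1, n2, rfl, hn1, hn2⟩ := List.sublist_append_iff.mp hn
  have hm1J := wordProd_mem cs J m1 fun i hi => hlp i (hm1.subset hi)
  have hn1J := wordProd_mem cs J n1 fun i hi => hlp i (hm1.subset (hn1.subset hi))
  have hn2x : n2 = lx := by
    apply hrig n2 (hn2.trans hm2)
    have := dc_mul cs hmin1 (inv_mem hn1J) (one_mem (cs.parabolic K))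
    rw [← hnx] at this
    simpa [wordProd_append] using this
  subst hn2x
  have hm2x : m2 = n2 := hm2.antisymm hn2
  subst hm2x
  have := dc_mul cs hmin1 hm1J (one_mem (cs.parabolic K))
  rw [hx] at this
  rw [← hmu, wordProd_append]
  simpa using this
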